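/- Assume k is an integral domain. Then the ideal of inertia forms T_𝔪(𝒟) is a prime ideal of C, and consequently 𝔓 = T_𝔪(𝒟) ∩ A is a prime ideal of A. -/

import Mathlib

set_option maxSynthPendingDepth 3

open MvPolynomial

/-- Index type for the coefficient indeterminates `U_{i,α}`, `i ∈ {1,2}`,
`α` an exponent vector in four variables with `|α| = d i`. -/
def CoefIdx (d : Fin 2 → ℕ) : Type :=
  Σ i : Fin 2, {α : Fin 4 →₀ ℕ // (α.sum fun _ e => e) = d i}

/-- The universal ring of coefficients `A = k[U_{i,α}]`. -/
abbrev Aring (k : Type*) [CommRing k] (d : Fin 2 → ℕ) : Type _ :=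
  MvPolynomial (CoefIdx d) k

/-- The polynomial ring `C = A[x₁,x₂,x₃,x₄]`. -/
abbrev Cring (k : Type*) [CommRing k] (d : Fin 2 → ℕ) : Type _ :=
  MvPolynomial (Fin 4) (Aring k d)

/-- The generic homogeneous polynomial `f_i = Σ_{|α| = d i} U_{i,α} x^α` of degree `d i`. -/
noncomputable def genF (k : Type*) [CommRing k] (d : Fin 2 → ℕ) (i : Fin 2) : Cring k d :=
  ∑ α ∈ (Finset.finsuppAntidiag (Finset.univ : Finset (Fin 4)) (d i)).attach,
    monomial α.1 (X (⟨i, ⟨α.1, (Finset.mem_finsuppAntidiag'.mp α.2).1⟩⟩ : CoefIdx d))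

/-- The 2-minors `J_{r,s} = ∂ᵣf₁·∂ₛf₂ − ∂ₛf₁·∂ᵣf₂` of the Jacobian matrix of `(f₁,f₂)`. -/
noncomputable def Jmin (k : Type*) [CommRing k] (d : Fin 2 → ℕ) (r s : Fin 4) : Cring k d :=
  pderiv r (genF k d 0) * pderiv s (genF k d 1) -
    pderiv s (genF k d 0) * pderiv r (genF k d 1)

/-- The ideal `𝒟 = (f₁, f₂) + (J_{r,s} : r < s) ⊂ C`. -/
noncomputable def Dideal (k : Type*) [CommRing k] (d : Fin 2 → ℕ) : Ideal (Cring k d) :=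
  Ideal.span ({genF k d 0, genF k d 1} ∪ {p | ∃ r s : Fin 4, r < s ∧ p = Jmin k d r s})

/-- The maximal graded ideal `𝔪 = (x₁,x₂,x₃,x₄) ⊂ C`. -/
noncomputable def mIdeal (k : Type*) [CommRing k] (d : Fin 2 → ℕ) : Ideal (Cring k d) :=
  Ideal.span (Set.range (X : Fin 4 → Cring k d))

noncomputable section Helpers

/-- exponent vector of `a_i b_r`. -/
def eab (q : Fin 2 × Fin 4) : Fin 2 ⊕ Fin 4 →₀ ℕ :=
  Finsupp.single (Sum.inl q.1) 1 + Finsupp.single (Sum.inr q.2) 1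

/-- the exponent map of the Segre map. -/
def segExp (m : Fin 2 × Fin 4 →₀ ℕ) : Fin 2 ⊕ Fin 4 →₀ ℕ := ∑ q, m q • eab q

lemma segExp_add (m n) : segExp (m + n) = segExp m + segExp n := by
  simp [segExp, add_smul, Finset.sum_add_distrib]

lemma segExp_single (q) : segExp (Finsupp.single q 1) = eab q := by
  unfold segExp
  rw [Finset.sum_eq_single q]
  · simp
  · intro b _ hb
    simp [Ne.symm hb]
  · simp

lemma segExp_inl (m) (i : Fin 2) : segExp m (Sum.inl i) = ∑ r, m (i, r) := by
  unfold segExp eab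
  rw [Finsupp.finsetSum_apply, Fintype.sum_prod_type]
  fin_cases i <;> simp [Finsupp.single_apply]

lemma segExp_inr (m) (r : Fin 4) : segExp m (Sum.inr r) = m (0, r) + m (1, r) := by
  unfold segExp eab
  rw [Finsupp.finsetSum_apply, Fintype.sum_prod_type]
  simp [Finsupp.single_apply]

lemma exists_sub_single {σ : Type*} [DecidableEq σ] (m : σ →₀ ℕ) (q : σ) (h : 0 < m q) :
    ∃ n, m = n + Finsupp.single q 1 := by
  refine ⟨m - Finsupp.single q 1, ?_⟩
  rw [tsub_add_cancel_of_le]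
  rw [Finsupp.single_le_iff]
  exact h

/-- The ideal of generic 2-minors. -/
def minors (L : Type*) [CommRing L] : Ideal (MvPolynomial (Fin 2 × Fin 4) L) :=
  Ideal.span {p | ∃ r s : Fin 4, p = X (0, r) * X (1, s) - X (0, s) * X (1, r)}

lemma mk_monomial_eq (L : Type*) [CommRing L] : ∀ (N : ℕ) (m m' : Fin 2 × Fin 4 →₀ ℕ),
    (∑ q, m q = N) → segExp m = segExp m' →
    Ideal.Quotient.mk (minors L) (monomial m 1) = Ideal.Quotient.mk (minors L) (monomial m' 1) := by
  intro N
  induction N with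
  | zero =>
    intro m m' hN h
    have hm : m = 0 := by
      ext q
      exact (Finset.sum_eq_zero_iff.mp hN) q (Finset.mem_univ _)
    subst hm
    have hm' : m' = 0 := by
      ext ⟨i, r⟩
      have := DFunLike.congr_fun h (Sum.inr r)
      rw [segExp_inr, segExp_inr] at this
      simp only [Finsupp.coe_zero, Pi.zero_apply] at this ⊢
      fin_cases i <;> simp <;> omega
    rw [hm']
  | succ N ih =>
    -- sharing a variable
    have share : ∀ (n n' : Fin 2 × Fin 4 →₀ ℕ) (q), (∑ p, (n + Finsupp.single q 1 : Fin 2 × Fin 4 →₀ ℕ) p = N + 1) →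
        segExp (n + Finsupp.single q 1) = segExp (n' + Finsupp.single q 1) →
        Ideal.Quotient.mk (minors L) (monomial (n + Finsupp.single q 1) 1) =
        Ideal.Quotient.mk (minors L) (monomial (n' + Finsupp.single q 1) 1) := by
      intro n n' q h1 h2
      rw [segExp_add, segExp_add] at h2
      have h3 := add_right_cancel h2
      have h4 : ∑ p, n p = N := by
        simp only [Finsupp.add_apply, Finset.sum_add_distrib, Finsupp.single_apply] at h1
        simpa using h1
      have := ih n n' h4 h3
      rw [monomial_add_single, monomial_add_single, map_mul, map_mul, this]
    intro m m' hN h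
    by_cases hr : ∃ r, 0 < m (0, r)
    · obtain ⟨r, hr⟩ := hr
      obtain ⟨n, rfl⟩ := exists_sub_single m _ hr
      by_cases hr' : 0 < m' (0, r)
      · obtain ⟨n', rfl⟩ := exists_sub_single m' _ hr'
        exact share _ _ _ hN h
      · have e1 := DFunLike.congr_fun h (Sum.inl 0)
        have e2 := DFunLike.congr_fun h (Sum.inr r)
        rw [segExp_inl, segExp_inl] at e1
        rw [segExp_inr, segExp_inr] at e2
        have h1 : 0 < m' (1, r) := by omega
        obtain ⟨n', rfl⟩ := exists_sub_single m' _ h1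
        have h0 : ∃ s, 0 < n' (0, s) := by
          by_contra hc
          push Not at hc
          have : ∑ s, (n' + Finsupp.single ((1 : Fin 2), r) 1 : Fin 2 × Fin 4 →₀ ℕ) (0, s) = 0 := by
            apply Finset.sum_eq_zero
            intro s _
            have := hc s
            simp [Finsupp.single_apply]
            omega
          rw [this] at e1
          have := Finset.sum_eq_zero_iff.mp e1 r (Finset.mem_univ _)
          omega
        obtain ⟨s, hs⟩ := h0
        obtain ⟨l, rfl⟩ := exists_sub_single n' _ hs
        have hsw : Ideal.Quotient.mk (minors L) (monomial (l + Finsupp.single ((0 : Fin 2), s) 1 +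
            Finsupp.single ((1 : Fin 2), r) 1) 1) =
            Ideal.Quotient.mk (minors L) (monomial (l + Finsupp.single ((1 : Fin 2), s) 1 +
            Finsupp.single ((0 : Fin 2), r) 1) 1) := by
          rw [Ideal.Quotient.eq]
          simp only [monomial_add_single, pow_one]
          have : (X (0, s) * X (1, r) - X (0, r) * X (1, s) : MvPolynomial (Fin 2 × Fin 4) L) ∈
            minors L := Ideal.subset_span ⟨s, r, rfl⟩
          convert Ideal.mul_mem_left _ (monomial l 1) this using 1
          ring
        rw [hsw]
        apply share _ _ _ hN
        rw [h]
        simp only [segExp_add, segExp_single, eab]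
        abel
    · push Not at hr
      have e1 := DFunLike.congr_fun h (Sum.inl 0)
      rw [segExp_inl, segExp_inl, Finset.sum_eq_zero (fun s _ => by have := hr s; omega)] at e1
      have hmm : m = m' := by
        ext ⟨i, r⟩
        have e2 := DFunLike.congr_fun h (Sum.inr r)
        rw [segExp_inr, segExp_inr] at e2
        have e3 := Finset.sum_eq_zero_iff.mp e1.symm r (Finset.mem_univ _)
        have := hr r
        fin_cases i <;> simp <;> omega
      rw [hmm]

/-- the Segre map -/
def segre (L : Type*) [CommRing L] :
    MvPolynomial (Fin 2 × Fin 4) L →ₐ[L] MvPolynomial (Fin 2 ⊕ Fin 4) L :=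
  aeval fun q => X (Sum.inl q.1) * X (Sum.inr q.2)

lemma segre_monomial (L : Type*) [CommRing L] (m) (c : L) :
    segre L (monomial m c) = monomial (segExp m) c := by
  rw [segre, aeval_monomial, segExp, Finsupp.prod_fintype _ _ (by simp),
    show (monomial (∑ q, m q • eab q) c : MvPolynomial (Fin 2 ⊕ Fin 4) L)
      = C c * monomial (∑ q, m q • eab q) 1 by rw [C_mul_monomial, mul_one]]
  rw [monomial_sum_one]
  congr 1
  apply Finset.prod_congr rfl
  intro q _
  rw [X, X, monomial_mul, monomial_pow]
  simp [eab]

lemma mem_minors_of_segre (L : Type*) [CommRing L] (p) (hp : segre L p = 0) : p ∈ minors L := by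
  classical
  let Q := MvPolynomial (Fin 2 × Fin 4) L ⧸ minors L
  let σ : (Fin 2 ⊕ Fin 4 →₀ ℕ) → (Fin 2 × Fin 4 →₀ ℕ) := Function.invFun segExp
  have hσ : ∀ m, segExp (σ (segExp m)) = segExp m := fun m =>
    Function.invFun_eq (f := segExp) ⟨m, rfl⟩
  let S : MvPolynomial (Fin 2 ⊕ Fin 4) L →ₗ[L] Q :=
    (basisMonomials (Fin 2 ⊕ Fin 4) L).constr L
      fun e => Ideal.Quotient.mk (minors L) (monomial (σ e) 1)
  have hS : S ∘ₗ (segre L).toLinearMap = (Ideal.Quotient.mkₐ L (minors L)).toLinearMap := by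
    apply (basisMonomials (Fin 2 × Fin 4) L).ext
    intro m
    simp only [coe_basisMonomials, LinearMap.comp_apply, AlgHom.toLinearMap_apply, segre_monomial]
    have : S (monomial (segExp m) 1) = Ideal.Quotient.mk (minors L) (monomial (σ (segExp m)) 1) := by
      have := (basisMonomials (Fin 2 ⊕ Fin 4) L).constr_basis L
        (fun e => (Ideal.Quotient.mk (minors L) (monomial (σ e) 1) : Q)) (segExp m)
      simpa [S] using this
    rw [this]
    exact mk_monomial_eq L _ _ _ rfl (hσ m)
  have := LinearMap.congr_fun hS p
  simp only [LinearMap.comp_apply, AlgHom.toLinearMap_apply, hp, map_zero] at this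
  exact Ideal.Quotient.eq_zero_iff_mem.mp this.symm


section Theta

variable {k : Type*} [CommRing k] {d : Fin 2 → ℕ} {W : Type*} [CommRing W]

/-- constructor of `CoefIdx`. -/
def cidx (i : Fin 2) (α : Fin 4 →₀ ℕ) (h : (α.sum fun _ e => e) = d i) : CoefIdx d := ⟨i, ⟨α, h⟩⟩

lemma genF_eq (i : Fin 2) : genF k d i =
    ∑ α ∈ (Finset.finsuppAntidiag (Finset.univ : Finset (Fin 4)) (d i)).attach,
      (X (cidx i α.1 (Finset.mem_finsuppAntidiag'.mp α.2).1) : Aring k d) •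
        (monomial α.1 1 : Cring k d) := by
  unfold genF
  refine Finset.sum_congr rfl fun α _ => ?_
  rw [smul_monomial, smul_eq_mul, mul_one]
  rfl

lemma genF_homog (i : Fin 2) : (genF k d i).IsHomogeneous (d i) := by
  unfold genF
  refine IsHomogeneous.sum _ _ _ fun α _ => ?_
  apply isHomogeneous_monomial
  exact (Finset.mem_finsuppAntidiag'.mp α.2).1

/-- the exponent of `x_j^(n-1) x_r`. -/
def spe (j : Fin 4) (n : ℕ) (r : Fin 4) : Fin 4 →₀ ℕ :=
  Finsupp.single j (n - 1) + Finsupp.single r 1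

/-- translate the special coefficients by `c`. -/
def theta (γ : Cring k d →+* W) (c : Fin 2 → Fin 4 → W) (j : Fin 4) : Cring k d →+* W :=
  eval₂Hom (eval₂Hom (γ.comp ((C : Aring k d →+* Cring k d).comp C))
    (fun idx : CoefIdx d => γ (C (X idx)) +
      ∑ r, if idx.2.1 = spe j (d idx.1) r then c idx.1 r else 0)) (fun r => γ (X r))

variable (γ : Cring k d →+* W) (c : Fin 2 → Fin 4 → W) (j : Fin 4)

lemma theta_X (r) : theta γ c j (X r) = γ (X r) := by simp [theta]

lemma theta_CC (a : k) : theta γ c j (C (C a)) = γ (C (C a)) := by simp [theta]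

lemma theta_CX (idx : CoefIdx d) : theta γ c j (C (X idx)) = γ (C (X idx)) +
      ∑ r, if idx.2.1 = spe j (d idx.1) r then c idx.1 r else 0 := by simp [theta]

lemma theta_cidx (i α h) : theta γ c j (C (X (cidx i α h))) = γ (C (X (cidx i α h))) +
      ∑ r, if α = spe j (d i) r then c i r else 0 := theta_CX γ c j _

lemma theta_mon (α : Fin 4 →₀ ℕ) (n : ℕ) :
    theta γ c j (monomial α (n : Aring k d)) = γ (monomial α (n : Aring k d)) := by
  rw [monomial_eq, Finsupp.prod_fintype _ _ (by simp)]
  simp [theta_X]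

lemma theta_D (D : Cring k d →ₗ[Aring k d] Cring k d)
    (hD : ∀ α, theta γ c j (D (monomial α 1)) = γ (D (monomial α 1))) (i : Fin 2)
    (hd : 0 < d i) :
    theta γ c j (D (genF k d i)) = γ (D (genF k d i)) +
      ∑ r, c i r * γ (D (monomial (spe j (d i) r) 1)) := by
  rw [genF_eq]
  simp only [map_sum, map_smul]
  simp only [smul_eq_C_mul, map_mul, hD, theta_cidx, add_mul,
    Finset.sum_add_distrib, Finset.sum_mul]
  congr 1
  rw [Finset.sum_comm]
  refine Finset.sum_congr rfl fun r _ => ?_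
  have hmem : spe j (d i) r ∈ Finset.finsuppAntidiag (Finset.univ : Finset (Fin 4)) (d i) := by
    rw [Finset.mem_finsuppAntidiag']
    refine ⟨?_, by simp⟩
    have : (spe j (d i) r).degree = d i := by
      rw [spe, map_add, Finsupp.degree_single, Finsupp.degree_single]
      omega
    exact this
  rw [Finset.sum_eq_single ⟨_, hmem⟩]
  · simp
  · intro b _ hb
    have : b.1 ≠ spe j (d i) r := fun h => hb (Subtype.ext h)
    simp [this]
  · intro h
    exact absurd (Finset.mem_attach _ _) h

lemma mon_spe (n r) : (monomial (spe j n r) 1 : Cring k d) = X j ^ (n - 1) * X r := by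
  rw [spe, monomial_add_single, pow_one, X_pow_eq_monomial]

lemma theta_genF (i : Fin 2) (hd : 0 < d i) :
    theta γ c j (genF k d i) = γ (genF k d i) +
      ∑ r, c i r * (γ (X j) ^ (d i - 1) * γ (X r)) := by
  have := theta_D γ c j LinearMap.id (fun α => by simpa using theta_mon γ c j α 1) i hd
  simpa [mon_spe] using this

lemma theta_pderiv (i : Fin 2) (s : Fin 4) (hs : s ≠ j) (hd : 0 < d i) :
    theta γ c j (pderiv s (genF k d i)) = γ (pderiv s (genF k d i)) +
      c i s * γ (X j) ^ (d i - 1) := by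
  have := theta_D γ c j (pderiv s : Derivation (Aring k d) (Cring k d) (Cring k d)) (fun α => by
    simp only [Derivation.coeFn_coe, pderiv_monomial, one_mul]
    exact theta_mon γ c j _ _) i hd
  simp only [Derivation.coeFn_coe, mon_spe] at this
  rw [this]
  congr 1
  rw [Finset.sum_eq_single s]
  · simp [pderiv_mul, pderiv_pow, pderiv_X_of_ne hs.symm]
  · intro b _ hb
    simp [pderiv_mul, pderiv_pow, pderiv_X_of_ne hs.symm, pderiv_X_of_ne hb]
  · simp

end Theta

section Main

variable {k : Type*} [CommRing k] [IsDomain k] {d : Fin 2 → ℕ}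

lemma exists_hom_aux (hd : ∀ i, 0 < d i) (j : Fin 4) (L : Type*) [CommRing L] [IsDomain L]
    [Algebra (Cring k d) L] [IsLocalization.Away (X j : Cring k d) L]
    (hinj : Function.Injective (algebraMap (Cring k d) L)) :
    ∃ I : Ideal (Cring k d), I.IsPrime ∧ (∀ r, X r ∉ I) ∧
      ∀ p, p ∈ I ↔ ∃ n : ℕ, X j ^ n * p ∈ Dideal k d := by
  classical
  let γ : Cring k d →+* MvPolynomial (Fin 2 × Fin 4) L := (C : L →+* MvPolynomial (Fin 2 × Fin 4) L).comp (algebraMap (Cring k d) L)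
  let Y : MvPolynomial (Fin 2 × Fin 4) L := C (IsLocalization.Away.invSelf (X j : Cring k d))
  have hY : γ (X j) * Y = 1 := by
    simp only [γ, Y, RingHom.comp_apply, ← C_mul]
    rw [IsLocalization.Away.mul_invSelf, C_1]
  let w : Fin 2 → Fin 4 → MvPolynomial (Fin 2 × Fin 4) L := fun i r =>
    if r = j then 0 else X (i, r) - γ (pderiv r (genF k d i))
  let c : Fin 2 → Fin 4 → MvPolynomial (Fin 2 × Fin 4) L := fun i r => Y ^ (d i - 1) * w i r +
    if r = j then - (Y ^ (d i) * (γ (genF k d i) + ∑ s, w i s * γ (X s))) else 0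
  let θ : Cring k d →+* MvPolynomial (Fin 2 × Fin 4) L := theta γ c j
  have hYp : ∀ n, Y ^ n * γ (X j) ^ n = 1 := fun n => by
    rw [← mul_pow, mul_comm, hY, one_pow]
  have θf : ∀ i, θ (genF k d i) = 0 := by
    intro i
    have h1 : θ (genF k d i) = _ := theta_genF γ c j i (hd i)
    rw [h1]
    have h2 : ∀ r, c i r * (γ (X j) ^ (d i - 1) * γ (X r)) = w i r * γ (X r) +
        if r = j then - (γ (genF k d i) + ∑ s, w i s * γ (X s)) else 0 := by
      intro r
      have e1 := hYp (d i - 1)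
      have e2 := hYp (d i)
      obtain ⟨n, hn⟩ : ∃ n, d i = n + 1 := ⟨d i - 1, by have := hd i; omega⟩
      simp only [c]
      rw [hn] at e1 e2 ⊢
      simp only [Nat.add_sub_cancel] at e1 ⊢
      split_ifs with h
      · subst h
        rw [pow_succ (γ (X r))] at e2
        linear_combination (w i r * γ (X r)) * e1 -
          (γ (genF k d i) + ∑ s, w i s * γ (X s)) * e2
      · linear_combination (w i r * γ (X r)) * e1
    simp only [h2, Finset.sum_add_distrib, Finset.sum_ite_eq', Finset.mem_univ, if_true]
    ring
  have θd : ∀ i s, s ≠ j → θ (pderiv s (genF k d i)) = X (i, s) := by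
    intro i s hs
    have h1 : θ (pderiv s (genF k d i)) = _ := theta_pderiv γ c j i s hs (hd i)
    rw [h1]
    simp only [c, w, if_neg hs]
    linear_combination (X (i, s) - γ (pderiv s (genF k d i))) * hYp (d i - 1)
  let Φ : Cring k d →+* MvPolynomial (Fin 2 ⊕ Fin 4) L := (segre L : _ →+* _).comp θ
  have hΦX : ∀ r, Φ (X r) = C (algebraMap (Cring k d) L (X r)) := by
    intro r
    have : θ (X r) = γ (X r) := theta_X γ c j r
    simp only [Φ, RingHom.comp_apply, this, γ, segre]
    simp [algebraMap_eq]
  have hΦX0 : ∀ r, Φ (X r) ≠ 0 := by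
    intro r
    rw [hΦX, Ne, C_eq_zero, map_eq_zero_iff _ hinj]
    exact X_ne_zero r
  have Φf : ∀ i, Φ (genF k d i) = 0 := fun i => by simp [Φ, θf]
  have Φd : ∀ i s, s ≠ j → Φ (pderiv s (genF k d i)) = X (Sum.inl i) * X (Sum.inr s) := by
    intro i s hs
    simp [Φ, θd i s hs, segre]
  have Φd' : ∃ β : Fin 4 → MvPolynomial (Fin 2 ⊕ Fin 4) L, ∀ i s,
      Φ (X j) * Φ (pderiv s (genF k d i)) = X (Sum.inl i) * β s := by
    refine ⟨fun s => if s = j then - ∑ r ∈ Finset.univ.erase j, Φ (X r) * X (Sum.inr r)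
      else Φ (X j) * X (Sum.inr s), ?_⟩
    intro i s
    beta_reduce
    by_cases hs : s = j
    · subst hs
      have eu := congrArg Φ (genF_homog (k := k) (d := d) i).sum_X_mul_pderiv
      rw [map_nsmul, Φf, smul_zero, map_sum, ← Finset.add_sum_erase _ _ (Finset.mem_univ s),
        map_mul] at eu
      rw [eq_neg_of_add_eq_zero_left eu, if_pos rfl, mul_neg, Finset.mul_sum]
      congr 1
      refine Finset.sum_congr rfl fun r hr => ?_
      rw [map_mul, Φd i r (Finset.ne_of_mem_erase hr)]
      ring
    · rw [if_neg hs, Φd i s hs]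
      ring
  obtain ⟨β, hβ⟩ := Φd'
  have hDle : Dideal k d ≤ RingHom.ker Φ := by
    unfold Dideal
    rw [Ideal.span_le]
    rintro p (hp | ⟨r, s, _, rfl⟩)
    · rcases hp with rfl | rfl
      · exact Φf 0
      · exact Φf 1
    · have h2 : Φ (X j) * Φ (X j) * Φ (Jmin k d r s) = 0 := by
        simp only [Jmin, map_sub, map_mul]
        have a := hβ 0 r
        have b := hβ 1 s
        have a' := hβ 0 s
        have b' := hβ 1 r
        calc _ = (Φ (X j) * Φ (pderiv r (genF k d 0))) * (Φ (X j) * Φ (pderiv s (genF k d 1))) -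
              (Φ (X j) * Φ (pderiv s (genF k d 0))) * (Φ (X j) * Φ (pderiv r (genF k d 1))) := by
              ring
          _ = 0 := by rw [a, b, a', b']; ring
      exact (mul_eq_zero.mp h2).resolve_left (mul_ne_zero (hΦX0 j) (hΦX0 j))
  refine ⟨RingHom.ker Φ, RingHom.ker_isPrime Φ, fun r h => hΦX0 r h, fun p => ⟨fun hp => ?_, ?_⟩⟩
  · have hmin : θ p ∈ minors L := mem_minors_of_segre L _ hp
    let IL : Ideal L := (Dideal k d).map (algebraMap (Cring k d) L)
    let can : Cring k d →+* L ⧸ IL := (Ideal.Quotient.mk IL).comp (algebraMap (Cring k d) L)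
    have hcan : ∀ q ∈ Dideal k d, can q = 0 := fun q hq =>
      Ideal.Quotient.eq_zero_iff_mem.mpr (Ideal.mem_map_of_mem _ hq)
    have hJ : ∀ r s, r < s → can (Jmin k d r s) = 0 := fun r s h =>
      hcan _ (Ideal.subset_span (Or.inr ⟨r, s, h, rfl⟩))
    have hf : ∀ i, can (genF k d i) = 0 := by
      intro i
      apply hcan
      apply Ideal.subset_span
      left
      fin_cases i
      · exact Or.inl rfl
      · exact Or.inr rfl
    let η : MvPolynomial (Fin 2 × Fin 4) L →+* L ⧸ IL := eval₂Hom (Ideal.Quotient.mk IL) (fun q => can (pderiv q.2 (genF k d q.1)))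
    have hηγ : ∀ q, η (γ q) = can q := fun q => by simp [η, γ, can]
    have hηX : ∀ q, η (X q) = can (pderiv q.2 (genF k d q.1)) := fun q => by simp [η]
    have hη0 : ∀ q ∈ minors L, η q = 0 := by
      intro q hq
      have : minors L ≤ RingHom.ker η := by
        unfold minors
        rw [Ideal.span_le]
        rintro _ ⟨r, s, rfl⟩
        change η _ = 0
        simp only [map_sub, map_mul, hηX]
        rcases lt_trichotomy r s with h | h | h
        · have := hJ r s h
          simpa only [Jmin, map_sub, map_mul] using this
        · subst h
          ring
        · have := hJ s r h
          simp only [Jmin, map_sub, map_mul] at this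
          linear_combination - this
      exact this hq
    have hηw : ∀ i r, η (w i r) = 0 := by
      intro i r
      simp only [w]
      split_ifs
      · simp
      · rw [map_sub, hηX, hηγ, sub_self]
    have hηc : ∀ i r, η (c i r) = 0 := by
      intro i r
      simp only [c]
      split_ifs <;> simp [hηw, hηγ, hf]
    have hηθ : η.comp θ = can := by
      apply MvPolynomial.ringHom_ext
      · intro a
        have : (η.comp θ).comp C = can.comp C := by
          apply MvPolynomial.ringHom_ext
          · intro a
            have : θ (C (C a)) = γ (C (C a)) := theta_CC γ c j a
            simp only [RingHom.comp_apply, this, hηγ]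
          · intro idx
            have : θ (C (X idx)) = _ := theta_CX γ c j idx
            simp only [RingHom.comp_apply, this, map_add, hηγ, map_sum]
            rw [Finset.sum_eq_zero, add_zero]
            intro r _
            split_ifs
            · exact hηc _ _
            · simp
        exact RingHom.congr_fun this a
      · intro r
        have : θ (X r) = γ (X r) := theta_X γ c j r
        simp only [RingHom.comp_apply, this, hηγ]
    have h0 : can p = 0 := by
      rw [← hηθ, RingHom.comp_apply]
      exact hη0 _ hmin
    have h1 : algebraMap (Cring k d) L p ∈ IL := Ideal.Quotient.eq_zero_iff_mem.mp h0
    rw [IsLocalization.mem_map_algebraMap_iff (Submonoid.powers (X j : Cring k d))] at h1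
    obtain ⟨⟨⟨q, hq⟩, ⟨_, n, rfl⟩⟩, h⟩ := h1
    refine ⟨n, ?_⟩
    rw [← map_mul] at h
    have := hinj h
    simp only at this
    rw [mul_comm, this]
    exact hq
  · rintro ⟨n, hn⟩
    have := hDle hn
    rw [RingHom.mem_ker, map_mul, map_pow] at this
    exact (mul_eq_zero.mp this).resolve_left (pow_ne_zero _ (hΦX0 j))

lemma exists_hom (hd : ∀ i, 0 < d i) (j : Fin 4) :
    ∃ I : Ideal (Cring k d), I.IsPrime ∧ (∀ r, X r ∉ I) ∧
      ∀ p, p ∈ I ↔ ∃ n : ℕ, X j ^ n * p ∈ Dideal k d := by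
  have hM : Submonoid.powers (X j : Cring k d) ≤ nonZeroDivisors (Cring k d) :=
    powers_le_nonZeroDivisors_of_noZeroDivisors (X_ne_zero j)
  have hdomL : IsDomain (Localization.Away (X j : Cring k d)) :=
    IsLocalization.isDomain_localization hM
  exact exists_hom_aux hd j (Localization.Away (X j : Cring k d)) (IsLocalization.injective _ hM)

end Main

end Helpers

/-- **Corollary.** If `k` is a domain then the ideal of inertia forms
`T_𝔪(𝒟) = {p : ∃ ν, 𝔪^ν·p ⊆ 𝒟}` is a prime ideal of `C`, and consequently
`𝔓 = T_𝔪(𝒟) ∩ A` is a prime ideal of `A`. -/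
theorem inertiaForms_isPrime (k : Type*) [CommRing k] [IsDomain k] (d : Fin 2 → ℕ)
    (hd : ∀ i, 0 < d i) (T : Ideal (Cring k d))
    (hT : (T : Set (Cring k d)) =
      {p : Cring k d | ∃ ν : ℕ, ∀ q ∈ (mIdeal k d) ^ ν, q * p ∈ Dideal k d}) :
    T.IsPrime ∧ (T.comap (algebraMap (Aring k d) (Cring k d))).IsPrime := by
  suffices h : T.IsPrime from ⟨h, h.comap _⟩
  choose I hI hX hmem using fun j => exists_hom (k := k) hd j
  have hD : ∀ j, Dideal k d ≤ I j := fun j p hp => (hmem j p).2 ⟨0, by simpa using hp⟩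
  have hle : ∀ i j, I i ≤ I j := by
    intro i j p hp
    obtain ⟨n, hn⟩ := (hmem i p).1 hp
    exact ((hI j).mem_or_mem (hD j hn)).resolve_left
      fun h => hX j i ((hI j).mem_of_pow_mem _ h)
  have hTI : T = I 0 := by
    ext p
    rw [← SetLike.mem_coe, hT]
    constructor
    · rintro ⟨ν, hν⟩
      exact (hmem 0 p).2 ⟨ν, hν _ (Ideal.pow_mem_pow (Ideal.subset_span (Set.mem_range_self 0)) ν)⟩
    · intro hp
      let Q : Ideal (Cring k d) := Submodule.comap (LinearMap.mulRight (Cring k d) p) (Dideal k d)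
      have hQ : ∀ q, q ∈ Q ↔ q * p ∈ Dideal k d := fun q => Iff.rfl
      have hrad : mIdeal k d ≤ Q.radical := by
        unfold mIdeal
        rw [Ideal.span_le]
        rintro _ ⟨j, rfl⟩
        obtain ⟨n, hn⟩ := (hmem j p).1 (hle 0 j hp)
        exact ⟨n, hn⟩
      obtain ⟨ν, hν⟩ := Ideal.exists_pow_le_of_le_radical_of_fg hrad
        (Submodule.fg_span (Set.finite_range _))
      exact ⟨ν, fun q hq => (hQ q).1 (hν hq)⟩
  rw [hTI]
  exact hI 0
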